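/- Let V be a complex Banach space and let A : ℝ → Matrix (Fin p) (Fin p) ℂ be bounded and continuous with every entry almost automorphic, with fundamental matrix Φ_A, and suppose y' = A(t)y has an α-exponential dichotomy with constants c, α > 0 whose projection P commutes with Φ_A(t) for every t. Let ρ > 0, let f : ℝ → (Fin p → V) be bounded, continuous and almost automorphic with sup_{t} ‖f(t)‖ ≤ αρ/(2c), and set φ₀(t) = ∫_ℝ G_A(t,s)·f(s) ds. Let g : ℝ × (Fin p → V) → (Fin p → V) be continuous with g(t,0) = 0 for all t, almost automorphic in t uniformly for y in compact sets, and suppose there is L > 0 with ‖g(t,y₁) − g(t,y₂)‖ ≤ L·‖y₁ − y₂‖ for all t ∈ ℝ and all y₁, y₂ at distance at most ρ from φ₀(t). If 4cL < α, then there exists a unique almost automorphic differentiable y : ℝ → (Fin p → V) with sup_{t} ‖y(t) − φ₀(t)‖ ≤ ρ solving y'(t) = A(t)·y(t) + f(t) + g(t, y(t)) for all t ∈ ℝ. -/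

import Mathlib

open MeasureTheory Filter Topology

attribute [local instance] Matrix.linftyOpNormedAddCommGroup Matrix.linftyOpNormedRing
  Matrix.linftyOpNormedAlgebra

/-- A continuous function `ψ : ℝ → V` into a Banach space is almost automorphic if for every
sequence of reals there is a subsequence `(τₙ)` and a function `ψ̃` with
`ψ(t+τₙ) → ψ̃(t)` and `ψ̃(t−τₙ) → ψ(t)` pointwise on `ℝ`. -/
def AlmostAutomorphic {V : Type*} [NormedAddCommGroup V] (ψ : ℝ → V) : Prop :=
  Continuous ψ ∧ ∀ σ : ℕ → ℝ, ∃ k : ℕ → ℕ, StrictMono k ∧ ∃ ψt : ℝ → V,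
    (∀ t : ℝ, Tendsto (fun n => ψ (t + σ (k n))) atTop (𝓝 (ψt t))) ∧
    (∀ t : ℝ, Tendsto (fun n => ψt (t - σ (k n))) atTop (𝓝 (ψ t)))

/-- `g(t,y)` is almost automorphic in `t` uniformly for `y` in compact subsets of `W`. -/
def AlmostAutomorphicUniform {W : Type*} [NormedAddCommGroup W] (g : ℝ → W → W) : Prop :=
  ∀ K : Set W, IsCompact K → ∀ σ : ℕ → ℝ, ∃ k : ℕ → ℕ, StrictMono k ∧ ∃ gt : ℝ → W → W,
    (∀ t : ℝ, TendstoUniformlyOn (fun n y => g (t + σ (k n)) y) (gt t) atTop K) ∧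
    (∀ t : ℝ, TendstoUniformlyOn (fun n y => gt (t - σ (k n)) y) (g t) atTop K)

/-- `Φ` is a fundamental matrix of `y' = A(t) y`: it is differentiable with
`Φ'(t) = A(t) Φ(t)` and `Φ(t)` invertible for every `t`. -/
def IsFundamentalMatrix {p : ℕ} (A Φ : ℝ → Matrix (Fin p) (Fin p) ℂ) : Prop :=
  (∀ t : ℝ, HasDerivAt Φ (A t * Φ t) t) ∧ ∀ t : ℝ, IsUnit (Φ t)

/-- The Green matrix associated with a projection `P` and a fundamental matrix `Φ`. -/
noncomputable def GreenMat {p : ℕ} (Φ : ℝ → Matrix (Fin p) (Fin p) ℂ)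
    (P : Matrix (Fin p) (Fin p) ℂ) (t s : ℝ) : Matrix (Fin p) (Fin p) ℂ :=
  if s ≤ t then Φ t * (Φ s)⁻¹ * P else -(Φ t * (Φ s)⁻¹ * (1 - P))

/-- The action of a complex `p × p` matrix on vectors with entries in a complex vector space. -/
def matSMulVec {V : Type*} [AddCommGroup V] [Module ℂ V] {p : ℕ}
    (M : Matrix (Fin p) (Fin p) ℂ) (v : Fin p → V) : Fin p → V :=
  fun i => ∑ j : Fin p, M i j • v j

/-- The bounded solution `φ₀` of the linear inhomogeneous equation, given by the Green matrix. -/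
noncomputable def greenSol {V : Type*} [NormedAddCommGroup V] [NormedSpace ℂ V]
    [CompleteSpace V] {p : ℕ} (Φ : ℝ → Matrix (Fin p) (Fin p) ℂ)
    (P : Matrix (Fin p) (Fin p) ℂ) (f : ℝ → (Fin p → V)) (t : ℝ) : Fin p → V :=
  ∫ s : ℝ, matSMulVec (GreenMat Φ P t s) (f s)

/-!
Since the projection commutes with the evolution family, Duhamel's formula for the evolution
families `U`, `V` of two equations with coefficients `A`, `B` can be multiplied by it on both sides,
`P (U t s - V t s) P = ∫ r in s..t, U t r P (A r - B r) V r s P`, so that only bounded factors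
occur. The Green function therefore depends continuously on `A`; it inherits the translation limits
of `A`, and `h ↦ ∫ s, G t s • h s` preserves almost automorphy. The solutions in the tube around
`φ₀` are the fixed points there of `y ↦ ∫ s, G t s • (f s + g s (y s))`, which is a contraction of
the closed set of almost automorphic functions in the tube.
-/

section Translations

variable {V : Type*}

/-- `ψ'` is the limit of the translates `ψ (· + r)` as `r` runs along `F`, and `ψ` is recovered as
the limit of the translates `ψ' (· - r)`. This is the pair of limits in Bochner's definition of
almost automorphy, with a filter instead of a sequence `τ` (take `F = map τ atTop`), so that passing
to a subsequence is passing to a smaller filter. -/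
def IsTranslationLimit [TopologicalSpace V] (F : Filter ℝ) (ψ ψ' : ℝ → V) : Prop :=
  (∀ t, Tendsto (fun r => ψ (t + r)) F (𝓝 (ψ' t))) ∧
    ∀ t, Tendsto (fun r => ψ' (t - r)) F (𝓝 (ψ t))

theorem IsTranslationLimit.mono [TopologicalSpace V] {F F' : Filter ℝ} {ψ ψ' : ℝ → V}
    (h : IsTranslationLimit F ψ ψ') (hF : F' ≤ F) : IsTranslationLimit F' ψ ψ' :=
  ⟨fun t => (h.1 t).mono_left hF, fun t => (h.2 t).mono_left hF⟩

theorem IsTranslationLimit.norm_le [NormedAddCommGroup V] {F : Filter ℝ} [F.NeBot] {ψ ψ' : ℝ → V}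
    (h : IsTranslationLimit F ψ ψ') {C : ℝ} (hC : ∀ t, ‖ψ t‖ ≤ C) (t : ℝ) : ‖ψ' t‖ ≤ C :=
  le_of_tendsto (h.1 t).norm (Eventually.of_forall fun _ => hC _)

theorem IsTranslationLimit.stronglyMeasurable [NormedAddCommGroup V] {F : Filter ℝ} [F.NeBot]
    [F.IsCountablyGenerated] {ψ ψ' : ℝ → V} (h : IsTranslationLimit F ψ ψ')
    (hψ : StronglyMeasurable ψ) : StronglyMeasurable ψ' :=
  stronglyMeasurable_of_tendsto F
    (fun r => hψ.comp_measurable (measurable_id.add_const r)) (tendsto_pi_nhds.2 h.1)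

theorem map_comp_strictMono_le {X : Type*} (x : ℕ → X) {l : ℕ → ℕ} (hl : StrictMono l) :
    map (x ∘ l) atTop ≤ map x atTop := by
  rw [← Filter.map_map]
  exact map_mono hl.tendsto_atTop

-- Cantor's diagonal argument: `K (m + 1)` is a subsequence of `K m` satisfying `p m`, and
-- `n ↦ K n n` is eventually a subsequence of every `K m`.
theorem exists_subseq_forall_nat {X : Type*} {p : ℕ → Filter X → Prop}
    (hp : ∀ m, Antitone (p m))
    (hsub : ∀ m (x : ℕ → X), ∃ k : ℕ → ℕ, StrictMono k ∧ p m (map (x ∘ k) atTop)) (x : ℕ → X) :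
    ∃ k : ℕ → ℕ, StrictMono k ∧ ∀ m, p m (map (x ∘ k) atTop) := by
  choose J hJmono hJ using hsub
  let K : ℕ → ℕ → ℕ := fun m => Nat.rec id (fun i Ki => Ki ∘ J i (x ∘ Ki)) m
  have hK : ∀ m, StrictMono (K m) := fun m =>
    Nat.rec strictMono_id (fun i hi => hi.comp (hJmono i (x ∘ K i))) m
  have hfactor : ∀ m n, m ≤ n → ∀ j, ∃ i ≥ j, K n j = K m i := fun m n hmn =>
    Nat.le_induction (fun j => ⟨j, le_rfl, rfl⟩)
      (fun n _ ih j =>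
        let ⟨i, hi, h⟩ := ih (J n (x ∘ K n) j)
        ⟨i, (hJmono n _).le_apply.trans hi, h⟩) n hmn
  refine ⟨fun n => K n n, strictMono_nat_of_lt_succ fun n => ?_, fun m => ?_⟩
  · exact hK n (n.lt_succ_self.trans_le (hJmono n _).le_apply)
  · refine hp m (fun s hs => ?_) (hJ m (x ∘ K m))
    obtain ⟨N, hN⟩ := mem_atTop_sets.1 (mem_map.1 hs)
    refine mem_map.2 (mem_atTop_sets.2 ⟨max N (m + 1), fun n hn => ?_⟩)
    obtain ⟨i, hi, h⟩ := hfactor (m + 1) n (le_of_max_le_right hn) n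
    have hxi := hN i ((le_of_max_le_left hn).trans hi)
    rwa [Set.mem_preimage, Function.comp_apply, h]

theorem exists_subseq_forall {ι X : Type*} [Countable ι] {p : ι → Filter X → Prop}
    (hp : ∀ i, Antitone (p i))
    (hsub : ∀ i (x : ℕ → X), ∃ k : ℕ → ℕ, StrictMono k ∧ p i (map (x ∘ k) atTop)) (x : ℕ → X) :
    ∃ k : ℕ → ℕ, StrictMono k ∧ ∀ i, p i (map (x ∘ k) atTop) := by
  cases isEmpty_or_nonempty ι with
  | inl _ => exact ⟨id, strictMono_id, isEmptyElim⟩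
  | inr _ =>
    obtain ⟨e, he⟩ := exists_surjective_nat ι
    obtain ⟨k, hk, h⟩ := exists_subseq_forall_nat (fun m => hp (e m)) (fun m => hsub (e m)) x
    exact ⟨k, hk, he.forall.2 h⟩

end Translations

namespace AlmostAutomorphic

variable {V W : Type*} [NormedAddCommGroup V] [NormedAddCommGroup W] {ψ χ : ℝ → V}

theorem continuous (hψ : AlmostAutomorphic ψ) : Continuous ψ := hψ.1

theorem exists_subseq (hψ : AlmostAutomorphic ψ) (σ : ℕ → ℝ) :
    ∃ k : ℕ → ℕ, StrictMono k ∧ ∃ ψ', IsTranslationLimit (map (σ ∘ k) atTop) ψ ψ' :=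
  hψ.2 σ

theorem of_exists_subseq (hψ : Continuous ψ)
    (h : ∀ σ : ℕ → ℝ, ∃ k : ℕ → ℕ, StrictMono k ∧
      ∃ ψ', IsTranslationLimit (map (σ ∘ k) atTop) ψ ψ') : AlmostAutomorphic ψ :=
  ⟨hψ, h⟩

theorem exists_common_subseq {ι : Type*} [Countable ι] {ψ : ι → ℝ → V}
    (hψ : ∀ i, AlmostAutomorphic (ψ i)) (σ : ℕ → ℝ) :
    ∃ k : ℕ → ℕ, StrictMono k ∧ ∀ i, ∃ ψ', IsTranslationLimit (map (σ ∘ k) atTop) (ψ i) ψ' :=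
  exists_subseq_forall (p := fun i F => ∃ ψ', IsTranslationLimit F (ψ i) ψ')
    (fun _ _ _ hF ⟨ψ', h⟩ => ⟨ψ', h.mono hF⟩) (fun i => (hψ i).exists_subseq) σ

theorem exists_subseq_pair {χ : ℝ → W} (hψ : AlmostAutomorphic ψ) (hχ : AlmostAutomorphic χ)
    (σ : ℕ → ℝ) :
    ∃ k : ℕ → ℕ, StrictMono k ∧ (∃ ψ', IsTranslationLimit (map (σ ∘ k) atTop) ψ ψ') ∧
      ∃ χ', IsTranslationLimit (map (σ ∘ k) atTop) χ χ' := by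
  obtain ⟨k, hk, ψ', hψ'⟩ := hψ.exists_subseq σ
  obtain ⟨l, hl, χ', hχ'⟩ := hχ.exists_subseq (σ ∘ k)
  exact ⟨k ∘ l, hk.comp hl, ⟨ψ', hψ'.mono (map_comp_strictMono_le (σ ∘ k) hl)⟩, χ', hχ'⟩

theorem add (hψ : AlmostAutomorphic ψ) (hχ : AlmostAutomorphic χ) :
    AlmostAutomorphic fun t => ψ t + χ t := by
  refine of_exists_subseq (hψ.continuous.add hχ.continuous) fun σ => ?_
  obtain ⟨k, hk, ⟨ψ', hψ'⟩, χ', hχ'⟩ := hψ.exists_subseq_pair hχ σ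
  exact ⟨k, hk, fun t => ψ' t + χ' t, fun t => (hψ'.1 t).add (hχ'.1 t),
    fun t => (hψ'.2 t).add (hχ'.2 t)⟩

theorem isCompact_closure_range (hψ : AlmostAutomorphic ψ) :
    IsCompact (closure (Set.range ψ)) := by
  refine IsSeqCompact.isCompact fun x hx => ?_
  have happrox : ∀ n : ℕ, ∃ t, dist (x n) (ψ t) < 1 / ((n : ℝ) + 1) := fun n => by
    simpa using Metric.mem_closure_iff.1 (hx n) (1 / ((n : ℝ) + 1)) Nat.one_div_pos_of_nat
  choose σ hσ using happrox
  obtain ⟨k, hk, ψ', hψ'⟩ := hψ.exists_subseq σ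
  have hlim : Tendsto (fun n => ψ (σ (k n))) atTop (𝓝 (ψ' 0)) := by
    simpa [Function.comp_def] using tendsto_map'_iff.1 (hψ'.1 0)
  have hdist : Tendsto (fun n => dist (ψ (σ (k n))) (x (k n))) atTop (𝓝 0) :=
    squeeze_zero (fun _ => dist_nonneg) (fun n => (dist_comm _ _).trans_le (hσ (k n)).le)
      (tendsto_one_div_add_atTop_nhds_zero_nat.comp hk.tendsto_atTop)
  exact ⟨ψ' 0, mem_closure_of_tendsto hlim (Eventually.of_forall fun n => Set.mem_range_self _),
    k, hk, hlim.congr_dist hdist⟩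

theorem exists_norm_le (hψ : AlmostAutomorphic ψ) : ∃ M, ∀ t, ‖ψ t‖ ≤ M :=
  let ⟨M, hM⟩ := hψ.isCompact_closure_range.isBounded.exists_norm_le
  ⟨M, fun t => hM _ (subset_closure (Set.mem_range_self t))⟩

theorem superposition {g : ℝ → W → W} {y : ℝ → W} (hg : AlmostAutomorphicUniform g)
    (hgc : Continuous fun q : ℝ × W => g q.1 q.2) (hy : AlmostAutomorphic y) :
    AlmostAutomorphic fun t => g t (y t) := by
  refine of_exists_subseq (hgc.comp (continuous_id.prodMk hy.continuous)) fun σ => ?_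
  set K := closure (Set.range y)
  obtain ⟨k, hk, y', hy'⟩ := hy.exists_subseq σ
  obtain ⟨l, hl, g', hg'⟩ := hg K hy.isCompact_closure_range (σ ∘ k)
  replace hy' := hy'.mono (map_comp_strictMono_le (σ ∘ k) hl)
  have hyK : ∀ t, y t ∈ K := fun t => subset_closure (Set.mem_range_self t)
  have hy'K : ∀ t, y' t ∈ K := fun t =>
    isClosed_closure.mem_of_tendsto (hy'.1 t) (Eventually.of_forall fun _ => hyK _)
  have hgt : ∀ t, ContinuousOn (g t) K := fun t =>
    (hgc.comp (continuous_const.prodMk continuous_id)).continuousOn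
  have hg't : ∀ t, ContinuousOn (g' t) K := fun t =>
    (hg'.1 t).continuousOn (Frequently.of_forall fun _ => hgt _)
  refine ⟨k ∘ l, hk.comp hl, fun t => g' t (y' t), fun t => tendsto_map'_iff.2 ?_,
    fun t => tendsto_map'_iff.2 ?_⟩
  · exact (hg'.1 t).tendsto_comp (hg't t _ (hy'K t))
      (tendsto_nhdsWithin_iff.2 ⟨tendsto_map'_iff.1 (hy'.1 t), Eventually.of_forall fun _ => hyK _⟩)
  · exact (hg'.2 t).tendsto_comp (hgt t _ (hyK t))
      (tendsto_nhdsWithin_iff.2 ⟨tendsto_map'_iff.1 (hy'.2 t),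
        Eventually.of_forall fun _ => hy'K _⟩)

theorem of_tendstoUniformly [CompleteSpace V] {χ : ℕ → ℝ → V}
    (hχ : ∀ m, AlmostAutomorphic (χ m)) (hψ : TendstoUniformly χ ψ atTop) :
    AlmostAutomorphic ψ := by
  refine of_exists_subseq (hψ.continuous (Frequently.of_forall fun m => (hχ m).continuous))
    fun σ => ?_
  obtain ⟨k, hk, h⟩ := exists_common_subseq hχ σ
  choose χ' hχ' using h
  have hcauchy : UniformCauchySeqOn χ' atTop Set.univ := by
    rw [Metric.uniformCauchySeqOn_iff]
    intro ε hε
    obtain ⟨N, hN⟩ := Metric.uniformCauchySeqOn_iff.1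
      (tendstoUniformlyOn_univ.2 hψ).uniformCauchySeqOn (ε / 2) (half_pos hε)
    refine ⟨N, fun m hm n hn t _ => lt_of_le_of_lt ?_ (half_lt_self hε)⟩
    exact le_of_tendsto (((hχ' m).1 t).dist ((hχ' n).1 t))
      (Eventually.of_forall fun _ => (hN m hm n hn _ (Set.mem_univ _)).le)
  choose ψ' hψ' using fun t =>
    cauchySeq_tendsto_of_complete (hcauchy.cauchySeq (Set.mem_univ t))
  have hunif : TendstoUniformly χ' ψ' atTop :=
    tendstoUniformlyOn_univ.1 (hcauchy.tendstoUniformlyOn_of_tendsto fun t _ => hψ' t)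
  refine ⟨k, hk, ψ', fun t => ?_, fun t => ?_⟩
  · exact (hψ.comp fun r => t + r).tendsto_of_eventually_tendsto
      (Eventually.of_forall fun m => (hχ' m).1 t) (hψ' t)
  · exact (hunif.comp fun r => t - r).tendsto_of_eventually_tendsto
      (Eventually.of_forall fun m => (hχ' m).2 t) (hψ.tendsto_at t)

theorem of_entries {m n : Type*} [Fintype m] [Fintype n] {A : ℝ → Matrix m n V}
    (hA : ∀ i j, AlmostAutomorphic fun t => A t i j) : AlmostAutomorphic A := by
  refine of_exists_subseq
    (continuous_pi fun i => continuous_pi fun j => (hA i j).continuous) fun σ => ?_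
  obtain ⟨k, hk, h⟩ := exists_common_subseq (fun q : m × n => hA q.1 q.2) σ
  choose A' hA' using h
  exact ⟨k, hk, fun t => Matrix.of fun i j => A' (i, j) t,
    fun t => tendsto_pi_nhds.2 fun i => tendsto_pi_nhds.2 fun j => (hA' (i, j)).1 t,
    fun t => tendsto_pi_nhds.2 fun i => tendsto_pi_nhds.2 fun j => (hA' (i, j)).2 t⟩

end AlmostAutomorphic

section EvolutionFamily

/-- `U t s` is the evolution family (Cauchy operator) of the linear equation `x' = A(t) x`, that is
`Φ(t) Φ(s)⁻¹` for any fundamental solution `Φ`. The two-parameter form is used because it is stable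
under time translations. -/
structure IsEvolutionFamily {R : Type*} [NormedRing R] [NormedAlgebra ℝ R] (A : ℝ → R)
    (U : ℝ → ℝ → R) : Prop where
  self : ∀ t, U t t = 1
  mul : ∀ t s r, U t s * U s r = U t r
  hasDerivAt : ∀ t s, HasDerivAt (fun τ => U τ s) (A t * U t s) t

/-- The Green function of the evolution family `U` and the projection `P`. -/
noncomputable def greenFunction {R : Type*} [Ring R] (U : ℝ → ℝ → R) (P : R) (t s : ℝ) : R :=
  if s ≤ t then U t s * P else -(U t s * (1 - P))

/-- The evolution family `U` has an exponential dichotomy with exponent `α`, constant `c` and a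
constant projection `P` commuting with `U`; the stable and unstable estimates are stated together
as the decay of the Green function. -/
structure HasExponentialDichotomy {R : Type*} [NormedRing R] (U : ℝ → ℝ → R) (P : R)
    (c α : ℝ) : Prop where
  isIdempotentElem : IsIdempotentElem P
  commute : ∀ t s, Commute (U t s) P
  exponent_pos : 0 < α
  norm_le : ∀ t s, ‖greenFunction U P t s‖ ≤ c * Real.exp (-α * |t - s|)

section Ring

variable {R : Type*} [Ring R] {U : ℝ → ℝ → R} {P : R} {t s : ℝ}

theorem greenFunction_of_le (h : s ≤ t) : greenFunction U P t s = U t s * P :=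
  if_pos h

theorem greenFunction_of_lt (h : t < s) :
    greenFunction U P t s = -(U t s * (1 - P)) :=
  if_neg h.not_ge

theorem greenFunction_add_right (U : ℝ → ℝ → R) (P : R) (t s r : ℝ) :
    greenFunction (fun t s => U (t + r) (s + r)) P t s = greenFunction U P (t + r) (s + r) := by
  simp only [greenFunction, add_le_add_iff_right]

end Ring

variable {R : Type*} [NormedRing R] {P : R} {c α t s : ℝ}

namespace HasExponentialDichotomy

variable {U : ℝ → ℝ → R}

theorem constant_nonneg (hD : HasExponentialDichotomy U P c α) : 0 ≤ c := by
  simpa using (norm_nonneg _).trans (hD.norm_le 0 0)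

theorem norm_greenFunction_le_const (hD : HasExponentialDichotomy U P c α) (t s : ℝ) :
    ‖greenFunction U P t s‖ ≤ c := by
  refine (hD.norm_le t s).trans (mul_le_of_le_one_right hD.constant_nonneg ?_)
  rw [Real.exp_le_one_iff, neg_mul, neg_nonpos]
  exact mul_nonneg hD.exponent_pos.le (abs_nonneg _)

theorem norm_mul_proj_le (hD : HasExponentialDichotomy U P c α) (h : s ≤ t) :
    ‖U t s * P‖ ≤ c :=
  greenFunction_of_le (U := U) (P := P) h ▸ hD.norm_greenFunction_le_const t s

theorem norm_mul_one_sub_proj_le (hD : HasExponentialDichotomy U P c α) (h : t < s) :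
    ‖U t s * (1 - P)‖ ≤ c := by
  simpa only [greenFunction_of_lt h, norm_neg] using hD.norm_greenFunction_le_const t s

theorem comp_add_right (hD : HasExponentialDichotomy U P c α) (r : ℝ) :
    HasExponentialDichotomy (fun t s => U (t + r) (s + r)) P c α where
  isIdempotentElem := hD.isIdempotentElem
  commute _ _ := hD.commute _ _
  exponent_pos := hD.exponent_pos
  norm_le t s := by
    simpa only [greenFunction_add_right, add_sub_add_right_eq_sub] using
      hD.norm_le (t + r) (s + r)

end HasExponentialDichotomy

namespace IsEvolutionFamily

variable [NormedAlgebra ℝ R] {A B : ℝ → R} {U V : ℝ → ℝ → R}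

theorem comp_add_right (hU : IsEvolutionFamily A U) (r : ℝ) :
    IsEvolutionFamily (fun t => A (t + r)) fun t s => U (t + r) (s + r) where
  self _ := hU.self _
  mul _ _ _ := hU.mul _ _ _
  hasDerivAt t s := (hU.hasDerivAt (t + r) (s + r)).comp_add_const t r

theorem continuous_left (hU : IsEvolutionFamily A U) (s : ℝ) : Continuous fun t => U t s :=
  continuous_iff_continuousAt.2 fun t => (hU.hasDerivAt t s).continuousAt

variable [CompleteSpace R]

-- `σ ↦ U t σ` is the pointwise inverse of `σ ↦ U σ t`.
theorem hasDerivAt_right (hU : IsEvolutionFamily A U) (t s : ℝ) :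
    HasDerivAt (fun σ => U t σ) (-(U t s * A s)) s := by
  let u : ℝ → Rˣ := fun σ => ⟨U σ t, U t σ, by rw [hU.mul, hU.self], by rw [hU.mul, hU.self]⟩
  have hinv : (fun σ => U t σ) = fun σ => Ring.inverse (U σ t) :=
    funext fun σ => (Ring.inverse_unit (u σ)).symm
  have hderiv := (hasFDerivAt_ringInverse (𝕜 := ℝ) (u s)).comp_hasDerivAt s (hU.hasDerivAt s t)
  rw [hinv]
  exact hderiv.congr_deriv (by simp [u, mul_assoc, hU.mul, hU.self])

theorem continuous_right (hU : IsEvolutionFamily A U) (t : ℝ) : Continuous fun s => U t s :=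
  continuous_iff_continuousAt.2 fun s => (hU.hasDerivAt_right t s).continuousAt

theorem continuous_duhamel (hU : IsEvolutionFamily A U) (hV : IsEvolutionFamily B V)
    (hA : Continuous A) (hB : Continuous B) (t s : ℝ) :
    Continuous fun r => U t r * (A r - B r) * V r s :=
  ((hU.continuous_right t).mul (hA.sub hB)).mul (hV.continuous_left s)

theorem sub_eq_integral (hU : IsEvolutionFamily A U) (hV : IsEvolutionFamily B V)
    (hA : Continuous A) (hB : Continuous B) (t s : ℝ) :
    U t s - V t s = ∫ r in s..t, U t r * (A r - B r) * V r s := by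
  have hderiv : ∀ r, HasDerivAt (fun r => -(U t r * V r s)) (U t r * (A r - B r) * V r s) r :=
    fun r => ((hU.hasDerivAt_right t r).mul (hV.hasDerivAt r s)).neg.congr_deriv
      (by noncomm_ring)
  rw [intervalIntegral.integral_eq_sub_of_hasDerivAt (fun r _ => hderiv r)
    ((hU.continuous_duhamel hV hA hB t s).intervalIntegrable s t), hU.self, hV.self, one_mul,
    mul_one, neg_sub_neg]

theorem norm_sub_mul_le (hU : IsEvolutionFamily A U) (hV : IsEvolutionFamily B V)
    (hA : Continuous A) (hB : Continuous B) {Q : R} (hQ : IsIdempotentElem Q)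
    (hUQ : ∀ t s, Commute (U t s) Q) (hVQ : ∀ t s, Commute (V t s) Q)
    (hc : ∀ᵐ r : ℝ, r ∈ Set.uIoc s t → ‖U t r * Q‖ ≤ c ∧ ‖V r s * Q‖ ≤ c) :
    ‖U t s * Q - V t s * Q‖ ≤ c ^ 2 * |∫ r in s..t, ‖A r - B r‖| := by
  have hcut : ∀ r,
      Q * (U t r * (A r - B r) * V r s) * Q = U t r * Q * (A r - B r) * (V r s * Q) :=
    fun r => by rw [(hUQ t r).eq]; simp only [mul_assoc]
  have hduhamel : U t s * Q - V t s * Q =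
      ∫ r in s..t, U t r * Q * (A r - B r) * (V r s * Q) := by
    calc U t s * Q - V t s * Q = Q * (U t s - V t s) * Q := by
          rw [mul_sub, ← (hUQ t s).eq, ← (hVQ t s).eq, sub_mul, mul_assoc, mul_assoc, hQ.eq]
      _ = ∫ r in s..t, Q * (U t r * (A r - B r) * V r s) * Q := by
          rw [hU.sub_eq_integral hV hA hB]
          exact ((ContinuousLinearMap.mulLeftRight ℝ R Q Q).intervalIntegral_comp_comm
            ((hU.continuous_duhamel hV hA hB t s).intervalIntegrable s t)).symm
      _ = _ := by simp only [hcut]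
  have hbound : ∀ᵐ r ∂volume.restrict (Set.uIoc s t),
      ‖U t r * Q * (A r - B r) * (V r s * Q)‖ ≤ c ^ 2 * ‖A r - B r‖ := by
    rw [ae_restrict_iff' measurableSet_uIoc]
    filter_upwards [hc] with r hr hmem
    obtain ⟨hUr, hVr⟩ := hr hmem
    calc _ ≤ ‖U t r * Q‖ * ‖A r - B r‖ * ‖V r s * Q‖ := norm_mul₃_le
      _ ≤ c * ‖A r - B r‖ * c := by
          have hc0 : 0 ≤ c := (norm_nonneg _).trans hUr
          gcongr
      _ = c ^ 2 * ‖A r - B r‖ := by ring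
  have hint : IntervalIntegrable (fun r => c ^ 2 * ‖A r - B r‖) volume s t :=
    ((hA.sub hB).norm.const_mul _).intervalIntegrable s t
  refine hduhamel ▸ (intervalIntegral.norm_integral_le_abs_of_norm_le hbound hint).trans_eq ?_
  rw [intervalIntegral.integral_const_mul, abs_mul, abs_of_nonneg (sq_nonneg c)]

theorem norm_greenFunction_sub_le (hU : IsEvolutionFamily A U) (hV : IsEvolutionFamily B V)
    (hA : Continuous A) (hB : Continuous B) (hUD : HasExponentialDichotomy U P c α)
    (hVD : HasExponentialDichotomy V P c α) (t s : ℝ) :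
    ‖greenFunction U P t s - greenFunction V P t s‖ ≤ c ^ 2 * |∫ r in s..t, ‖A r - B r‖| := by
  rcases le_or_gt s t with hst | hts
  · rw [greenFunction_of_le hst, greenFunction_of_le hst]
    refine hU.norm_sub_mul_le hV hA hB hUD.isIdempotentElem hUD.commute hVD.commute
      (Eventually.of_forall fun r hr => ?_)
    rw [Set.uIoc_of_le hst] at hr
    exact ⟨hUD.norm_mul_proj_le hr.2, hVD.norm_mul_proj_le hr.1.le⟩
  · rw [greenFunction_of_lt hts, greenFunction_of_lt hts, ← neg_sub', norm_neg]
    refine hU.norm_sub_mul_le hV hA hB hUD.isIdempotentElem.one_sub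
      (fun t s => (Commute.one_right _).sub_right (hUD.commute t s))
      (fun t s => (Commute.one_right _).sub_right (hVD.commute t s)) ?_
    filter_upwards [volume.ae_ne s] with r hrs hr
    rw [Set.uIoc_of_ge hts.le] at hr
    exact ⟨hUD.norm_mul_one_sub_proj_le hr.1,
      hVD.norm_mul_one_sub_proj_le (lt_of_le_of_ne hr.2 hrs)⟩

end IsEvolutionFamily

end EvolutionFamily

section KernelLimits

/-- The analogue of `IsTranslationLimit` for a kernel `G t s` whose two arguments are translated by
the same amount. A kernel having such limits along a subsequence of every sequence of translations
is called bi-almost automorphic. -/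
def IsDiagonalTranslationLimit {E : Type*} [TopologicalSpace E] (F : Filter ℝ)
    (G G' : ℝ → ℝ → E) : Prop :=
  (∀ t s, Tendsto (fun r => G (t + r) (s + r)) F (𝓝 (G' t s))) ∧
    ∀ t s, Tendsto (fun r => G' (t - r) (s - r)) F (𝓝 (G t s))

theorem tendsto_abs_integral_norm_sub {E ι : Type*} [NormedAddCommGroup E] {l : Filter ι}
    [l.IsCountablyGenerated] {f₁ f₂ : ι → ℝ → E} {g₁ g₂ : ℝ → E} {C : ℝ}
    (hf₁ : ∀ i, StronglyMeasurable (f₁ i)) (hf₂ : ∀ i, StronglyMeasurable (f₂ i))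
    (hC₁ : ∀ i r, ‖f₁ i r‖ ≤ C) (hC₂ : ∀ i r, ‖f₂ i r‖ ≤ C)
    (hg₁ : ∀ r, Tendsto (fun i => f₁ i r) l (𝓝 (g₁ r)))
    (hg₂ : ∀ r, Tendsto (fun i => f₂ i r) l (𝓝 (g₂ r))) (s t : ℝ) :
    Tendsto (fun i => |∫ r in s..t, ‖f₁ i r - f₂ i r‖|) l
      (𝓝 |∫ r in s..t, ‖g₁ r - g₂ r‖|) := by
  refine Tendsto.abs (intervalIntegral.tendsto_integral_filter_of_dominated_convergence
    (fun _ => C + C)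
    (Eventually.of_forall fun i => ((hf₁ i).sub (hf₂ i)).norm.aestronglyMeasurable)
    (Eventually.of_forall fun i => Eventually.of_forall fun r _ => ?_)
    intervalIntegrable_const
    (Eventually.of_forall fun r _ => ((hg₁ r).sub (hg₂ r)).norm))
  rw [norm_norm]
  exact norm_sub_le_of_le (hC₁ i r) (hC₂ i r)

variable {R : Type*} [NormedRing R] [NormedAlgebra ℝ R] [CompleteSpace R] {A A' : ℝ → R}
  {U : ℝ → ℝ → R} {P : R} {c α C : ℝ} {F : Filter ℝ} [F.NeBot] [F.IsCountablyGenerated]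

theorem IsEvolutionFamily.dist_greenFunction_add_le (hU : IsEvolutionFamily A U)
    (hA : Continuous A) (hD : HasExponentialDichotomy U P c α) (t s a b : ℝ) :
    dist (greenFunction U P (t + a) (s + a)) (greenFunction U P (t + b) (s + b)) ≤
      c ^ 2 * |∫ r in s..t, ‖A (r + a) - A (r + b)‖| := by
  simpa only [greenFunction_add_right, dist_eq_norm] using
    (hU.comp_add_right a).norm_greenFunction_sub_le (hU.comp_add_right b)
      (hA.comp (continuous_add_const a)) (hA.comp (continuous_add_const b))
      (hD.comp_add_right a) (hD.comp_add_right b) t s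

theorem IsEvolutionFamily.exists_tendsto_greenFunction_add (hU : IsEvolutionFamily A U)
    (hA : Continuous A) (hC : ∀ t, ‖A t‖ ≤ C) (hD : HasExponentialDichotomy U P c α)
    (hA' : IsTranslationLimit F A A') (t s : ℝ) :
    ∃ x, Tendsto (fun r => greenFunction U P (t + r) (s + r)) F (𝓝 x) := by
  have hmeas : ∀ a, StronglyMeasurable fun r => A (r + a) := fun a =>
    (hA.comp (continuous_add_const a)).stronglyMeasurable
  have hlim : Tendsto (fun q : ℝ × ℝ => c ^ 2 * |∫ r in s..t, ‖A (r + q.1) - A (r + q.2)‖|)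
      (F ×ˢ F) (𝓝 0) := by
    simpa only [sub_self, norm_zero, intervalIntegral.integral_zero, abs_zero, mul_zero] using
      (tendsto_abs_integral_norm_sub (fun _ => hmeas _) (fun _ => hmeas _) (fun _ _ => hC _)
        (fun _ _ => hC _) (fun r => (hA'.1 r).comp tendsto_fst)
        (fun r => (hA'.1 r).comp tendsto_snd) s t).const_mul (c ^ 2)
  refine cauchy_map_iff_exists_tendsto.1 (cauchy_map_iff'.2 ?_)
  exact tendsto_uniformity_iff_dist_tendsto_zero.2 (squeeze_zero (fun _ => dist_nonneg)
    (fun q => hU.dist_greenFunction_add_le hA hD t s q.1 q.2) hlim)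

theorem IsEvolutionFamily.exists_isDiagonalTranslationLimit_greenFunction
    (hU : IsEvolutionFamily A U) (hA : Continuous A) (hC : ∀ t, ‖A t‖ ≤ C)
    (hD : HasExponentialDichotomy U P c α) (hA' : IsTranslationLimit F A A') :
    ∃ G', IsDiagonalTranslationLimit F (greenFunction U P) G' := by
  choose G' hG' using hU.exists_tendsto_greenFunction_add hA hC hD hA'
  refine ⟨G', hG', fun t s => tendsto_iff_dist_tendsto_zero.2 ?_⟩
  have hA'meas : StronglyMeasurable A' := hA'.stronglyMeasurable hA.stronglyMeasurable
  have hA'sub : ∀ a, StronglyMeasurable fun r => A' (r - a) := fun a =>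
    hA'meas.comp_measurable (measurable_id.sub_const a)
  have hbound : ∀ a, dist (G' (t - a) (s - a)) (greenFunction U P t s) ≤
      c ^ 2 * |∫ r in s..t, ‖A' (r - a) - A r‖| := fun a => by
    refine le_of_tendsto_of_tendsto ((hG' (t - a) (s - a)).dist tendsto_const_nhds)
      ((tendsto_abs_integral_norm_sub (f₁ := fun b r => A (r - a + b))
        (fun _ => Continuous.stronglyMeasurable (by fun_prop))
        (fun _ => hA.stronglyMeasurable) (fun _ _ => hC _) (fun _ => hC)
        (fun r => hA'.1 (r - a)) (fun _ => tendsto_const_nhds) s t).const_mul (c ^ 2))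
      (Eventually.of_forall fun b => ?_)
    simpa only [sub_add_eq_add_sub, add_sub_assoc, add_zero] using
      hU.dist_greenFunction_add_le hA hD t s (b - a) 0
  have hlim : Tendsto (fun a => c ^ 2 * |∫ r in s..t, ‖A' (r - a) - A r‖|) F (𝓝 0) := by
    simpa only [sub_self, norm_zero, intervalIntegral.integral_zero, abs_zero, mul_zero] using
      (tendsto_abs_integral_norm_sub hA'sub (fun _ => hA.stronglyMeasurable)
        (fun _ _ => hA'.norm_le hC _) (fun _ => hC) hA'.2 (fun _ => tendsto_const_nhds)
        s t).const_mul (c ^ 2)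
  exact squeeze_zero (fun _ => dist_nonneg) hbound hlim

end KernelLimits

section GreenIntegral

theorem integrable_exp_neg_mul_abs_sub {α : ℝ} (hα : 0 < α) (t : ℝ) :
    Integrable fun s : ℝ => Real.exp (-α * |t - s|) := by
  have hpos : IntegrableOn (fun s : ℝ => Real.exp (-α * |s|)) (Set.Ioi 0) :=
    (integrableOn_exp_mul_Ioi (neg_lt_zero.2 hα) 0).congr_fun
      (fun s hs => by simp only [abs_of_pos (Set.mem_Ioi.1 hs)]) measurableSet_Ioi
  have hneg : IntegrableOn (fun s : ℝ => Real.exp (-α * |s|)) (Set.Iic 0) :=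
    (integrableOn_exp_mul_Iic hα 0).congr_fun
      (fun s hs => by simp only [abs_of_nonpos (Set.mem_Iic.1 hs), neg_mul_neg]) measurableSet_Iic
  have hunion := hneg.union hpos
  rw [Set.Iic_union_Ioi, integrableOn_univ] at hunion
  exact hunion.comp_sub_left t

theorem integral_exp_neg_mul_abs_sub {α : ℝ} (hα : 0 < α) (t : ℝ) :
    ∫ s : ℝ, Real.exp (-α * |t - s|) = 2 / α := by
  rw [integral_sub_left_eq_self (fun s : ℝ => Real.exp (-α * |s|)) volume t,
    integral_comp_abs (f := fun x => Real.exp (-α * x)), integral_exp_mul_Ioi (neg_lt_zero.2 hα),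
    mul_zero, Real.exp_zero, neg_div_neg_eq, mul_one_div]

variable {R W : Type*} [NormedRing R] [NormedAddCommGroup W] [Module R W]
  {A : ℝ → R} {U : ℝ → ℝ → R} {P : R} {c α M : ℝ} {h k : ℝ → W}

/-- The candidate for the bounded solution of `x' = A(t) x + h(t)`. Like every Bochner integral it
is `0` at times `t` where the integrand is not integrable. -/
noncomputable def greenIntegral [NormedSpace ℝ W] (U : ℝ → ℝ → R) (P : R) (h : ℝ → W) (t : ℝ) :
    W :=
  ∫ s, greenFunction U P t s • h s

section Bounds

variable [IsBoundedSMul R W]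

theorem HasExponentialDichotomy.norm_greenFunction_smul_le (hD : HasExponentialDichotomy U P c α)
    {w : W} (hM : ‖w‖ ≤ M) (t s : ℝ) :
    ‖greenFunction U P t s • w‖ ≤ c * M * Real.exp (-α * |t - s|) :=
  calc ‖greenFunction U P t s • w‖ ≤ ‖greenFunction U P t s‖ * ‖w‖ := norm_smul_le _ _
    _ ≤ c * Real.exp (-α * |t - s|) * M :=
      mul_le_mul (hD.norm_le t s) hM (norm_nonneg _) ((norm_nonneg _).trans (hD.norm_le t s))
    _ = c * M * Real.exp (-α * |t - s|) := mul_right_comm _ _ _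

theorem HasExponentialDichotomy.norm_greenIntegral_le [NormedSpace ℝ W]
    (hD : HasExponentialDichotomy U P c α) (hM : ∀ s, ‖h s‖ ≤ M) (t : ℝ) :
    ‖greenIntegral U P h t‖ ≤ 2 * c / α * M := by
  refine (norm_integral_le_of_norm_le
    ((integrable_exp_neg_mul_abs_sub hD.exponent_pos t).const_mul (c * M))
    (Eventually.of_forall fun s => hD.norm_greenFunction_smul_le (hM s) t s)).trans_eq ?_
  rw [integral_const_mul, integral_exp_neg_mul_abs_sub hD.exponent_pos]
  ring

variable [NormedAlgebra ℝ R] [CompleteSpace R]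

theorem IsEvolutionFamily.stronglyMeasurable_greenFunction (hU : IsEvolutionFamily A U) (P : R)
    (t : ℝ) : StronglyMeasurable (greenFunction U P t) :=
  StronglyMeasurable.ite measurableSet_Iic
    ((hU.continuous_right t).mul continuous_const).stronglyMeasurable
    ((hU.continuous_right t).mul continuous_const).neg.stronglyMeasurable

theorem IsEvolutionFamily.integrable_greenFunction_smul (hU : IsEvolutionFamily A U)
    (hD : HasExponentialDichotomy U P c α) (hh : StronglyMeasurable h) (hM : ∀ s, ‖h s‖ ≤ M)
    (t : ℝ) : Integrable fun s => greenFunction U P t s • h s :=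
  ((integrable_exp_neg_mul_abs_sub hD.exponent_pos t).const_mul (c * M)).mono'
    ((hU.stronglyMeasurable_greenFunction P t).smul hh).aestronglyMeasurable
    (Eventually.of_forall fun s => hD.norm_greenFunction_smul_le (hM s) t s)

theorem IsEvolutionFamily.norm_greenIntegral_sub_le [NormedSpace ℝ W]
    (hU : IsEvolutionFamily A U) (hD : HasExponentialDichotomy U P c α) {M₁ M₂ : ℝ}
    (hh : StronglyMeasurable h) (hM₁ : ∀ s, ‖h s‖ ≤ M₁) (hk : StronglyMeasurable k)
    (hM₂ : ∀ s, ‖k s‖ ≤ M₂) (hM : ∀ s, ‖h s - k s‖ ≤ M) (t : ℝ) :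
    ‖greenIntegral U P h t - greenIntegral U P k t‖ ≤ 2 * c / α * M := by
  have hsub : greenIntegral U P h t - greenIntegral U P k t =
      greenIntegral U P (fun s => h s - k s) t := by
    simp only [greenIntegral, smul_sub]
    exact (integral_sub (hU.integrable_greenFunction_smul hD hh hM₁ t)
      (hU.integrable_greenFunction_smul hD hk hM₂ t)).symm
  exact hsub ▸ hD.norm_greenIntegral_le hM t

end Bounds

section Derivative

theorem IsEvolutionFamily.mul_greenFunction_sub [NormedAlgebra ℝ R] (hU : IsEvolutionFamily A U)
    (P : R) (r t s : ℝ) :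
    U r t * greenFunction U P t s - greenFunction U P r s =
      (Set.Ioc r t).indicator (U r) s - (Set.Ioc t r).indicator (U r) s := by
  simp only [greenFunction, Set.indicator, Set.mem_Ioc]
  by_cases hst : s ≤ t <;> by_cases hsr : s ≤ r <;>
    simp [hst, hsr, not_lt.2, not_le.1, ← mul_assoc, hU.mul, mul_sub]

variable [NormedAlgebra ℝ R] [CompleteSpace R] [NormedSpace ℝ W] [CompleteSpace W]
  [IsBoundedSMul R W] [IsScalarTower ℝ R W]

theorem IsEvolutionFamily.smul_greenIntegral_sub (hU : IsEvolutionFamily A U)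
    (hD : HasExponentialDichotomy U P c α) (hh : Continuous h) (hM : ∀ s, ‖h s‖ ≤ M) (r t : ℝ) :
    U r t • greenIntegral U P h t - greenIntegral U P h r = ∫ s in r..t, U r s • h s := by
  have hint := hU.integrable_greenFunction_smul hD hh.stronglyMeasurable hM
  have hcont : Continuous fun s => U r s • h s := (hU.continuous_right r).smul hh
  have hsmul : U r t • greenIntegral U P h t = ∫ s, U r t • greenFunction U P t s • h s :=
    ((ContinuousLinearMap.lsmul ℝ R (U r t)).integral_comp_comm (hint t)).symm
  have hdiff : ∀ s, U r t • greenFunction U P t s • h s - greenFunction U P r s • h s =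
      (Set.Ioc r t).indicator (fun s => U r s • h s) s -
        (Set.Ioc t r).indicator (fun s => U r s • h s) s := fun s => by
    rw [← mul_smul, ← sub_smul, hU.mul_greenFunction_sub, sub_smul, Set.indicator_smul_left,
      Set.indicator_smul_left]
  have hintU : Integrable fun s => U r t • greenFunction U P t s • h s :=
    (ContinuousLinearMap.lsmul ℝ R (U r t)).integrable_comp (hint t)
  calc U r t • greenIntegral U P h t - greenIntegral U P h r
      = ∫ s, (U r t • greenFunction U P t s • h s - greenFunction U P r s • h s) := by
        rw [hsmul, greenIntegral, integral_sub hintU (hint r)]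
    _ = ∫ s, ((Set.Ioc r t).indicator (fun s => U r s • h s) s -
          (Set.Ioc t r).indicator (fun s => U r s • h s) s) := by simp only [hdiff]
    _ = (∫ s in Set.Ioc r t, U r s • h s) - ∫ s in Set.Ioc t r, U r s • h s := by
        rw [integral_sub ((hcont.intervalIntegrable r t).1.integrable_indicator measurableSet_Ioc)
          ((hcont.intervalIntegrable r t).2.integrable_indicator measurableSet_Ioc),
          integral_indicator measurableSet_Ioc, integral_indicator measurableSet_Ioc]
    _ = ∫ s in r..t, U r s • h s := rfl

theorem IsEvolutionFamily.hasDerivAt_greenIntegral (hU : IsEvolutionFamily A U)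
    (hD : HasExponentialDichotomy U P c α) (hh : Continuous h) (hM : ∀ s, ‖h s‖ ≤ M) (t : ℝ) :
    HasDerivAt (greenIntegral U P h) (A t • greenIntegral U P h t + h t) t := by
  have hcont : Continuous fun s => U t s • h s := (hU.continuous_right t).smul hh
  have hvar : greenIntegral U P h = fun τ => U τ t •
      (greenIntegral U P h t + ∫ s in t..τ, U t s • h s) := funext fun τ => by
    rw [← hU.smul_greenIntegral_sub hD hh hM t τ, add_sub_cancel, ← mul_smul, hU.mul, hU.self,
      one_smul]
  have hint : HasDerivAt (fun τ => ∫ s in t..τ, U t s • h s) (U t t • h t) t :=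
    intervalIntegral.integral_hasDerivAt_right (hcont.intervalIntegrable t t)
      (hcont.stronglyMeasurableAtFilter _ _) hcont.continuousAt
  have hderiv := (hU.hasDerivAt t t).fun_smul (hint.const_add (greenIntegral U P h t))
  rw [← hvar] at hderiv
  refine hderiv.congr_deriv ?_
  simp only [hU.self, mul_one, one_smul, intervalIntegral.integral_same, add_zero]
  exact add_comm _ _

end Derivative

section BoundedSolutions

variable [NormedAlgebra ℝ R] [CompleteSpace R] [NormedSpace ℝ W] [IsBoundedSMul R W]
  [IsScalarTower ℝ R W] {x : ℝ → W}

theorem IsEvolutionFamily.smul_eq_of_hasDerivAt (hU : IsEvolutionFamily A U)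
    (hx : ∀ t, HasDerivAt x (A t • x t) t) (t s : ℝ) : U t s • x s = x t := by
  have hderiv : ∀ s, HasDerivAt (fun s => U t s • x s) 0 s := fun s => by
    refine ((hU.hasDerivAt_right t s).fun_smul (hx s)).congr_deriv ?_
    rw [neg_smul, mul_smul, add_neg_cancel]
  have hconst := is_const_of_deriv_eq_zero (fun s => (hderiv s).differentiableAt)
    (fun s => (hderiv s).deriv) s t
  simpa only [hU.self, one_smul] using hconst

-- With `G` the Green function, `P • x t = G t s • x s` for `s ≤ t` and
-- `(1 - P) • x t = -(G t s • x s)` for `t < s`; let `s` tend to `-∞` and to `+∞`.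
theorem IsEvolutionFamily.eq_zero_of_hasDerivAt (hU : IsEvolutionFamily A U)
    (hD : HasExponentialDichotomy U P c α) (hx : ∀ t, HasDerivAt x (A t • x t) t)
    (hM : ∀ t, ‖x t‖ ≤ M) (t : ℝ) : x t = 0 := by
  have hdecay : Tendsto (fun s => greenFunction U P t s • x s) (cocompact ℝ) (𝓝 0) := by
    refine squeeze_zero_norm (fun s => hD.norm_greenFunction_smul_le (hM s) t s) ?_
    have hdist : Tendsto (fun s => |t - s|) (cocompact ℝ) atTop := by
      simpa only [Real.dist_eq, abs_sub_comm] using tendsto_dist_right_cocompact_atTop t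
    simpa only [neg_mul, mul_zero, Function.comp_def] using
      (Real.tendsto_exp_neg_atTop_nhds_zero.comp
        (hdist.const_mul_atTop hD.exponent_pos)).const_mul (c * M)
  have hstable : P • x t = 0 := by
    refine tendsto_nhds_unique_of_eventuallyEq tendsto_const_nhds
      (hdecay.mono_left atBot_le_cocompact) ?_
    filter_upwards [eventually_le_atBot t] with s hs
    rw [greenFunction_of_le hs, (hD.commute t s).eq, mul_smul, hU.smul_eq_of_hasDerivAt hx]
  have hunstable : (1 - P) • x t = 0 := by
    refine tendsto_nhds_unique_of_eventuallyEq tendsto_const_nhds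
      (neg_zero (G := W) ▸ (hdecay.mono_left atTop_le_cocompact).neg) ?_
    filter_upwards [eventually_gt_atTop t] with s hs
    rw [greenFunction_of_lt hs, neg_smul, neg_neg,
      ((Commute.one_right _).sub_right (hD.commute t s)).eq, mul_smul,
      hU.smul_eq_of_hasDerivAt hx]
  rw [← one_smul R (x t), ← add_sub_cancel P 1, add_smul, hstable, hunstable, add_zero]

theorem IsEvolutionFamily.eq_greenIntegral_of_hasDerivAt [CompleteSpace W]
    (hU : IsEvolutionFamily A U) (hD : HasExponentialDichotomy U P c α) (hh : Continuous h)
    (hM : ∀ t, ‖h t‖ ≤ M) (hx : ∀ t, HasDerivAt x (A t • x t + h t) t) {N : ℝ}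
    (hN : ∀ t, ‖x t‖ ≤ N) (t : ℝ) : x t = greenIntegral U P h t := by
  have hderiv : ∀ t, HasDerivAt (fun t => x t - greenIntegral U P h t)
      (A t • (x t - greenIntegral U P h t)) t := fun t => by
    refine ((hx t).fun_sub (hU.hasDerivAt_greenIntegral hD hh hM t)).congr_deriv ?_
    rw [smul_sub, add_sub_add_right_eq_sub]
  exact sub_eq_zero.1 (hU.eq_zero_of_hasDerivAt hD hderiv
    (fun t => norm_sub_le_of_le (hN t) (hD.norm_greenIntegral_le hM t)) t)

end BoundedSolutions

section AlmostAutomorphic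

variable [NormedSpace ℝ W] [IsBoundedSMul R W]

theorem tendsto_integral_kernel_smul_add {ι : Type*} {l : Filter ι} [l.IsCountablyGenerated]
    {K K' : ℝ → ℝ → R} {h h' : ℝ → W} {b : ℝ → ℝ} {r : ι → ℝ} {t : ℝ}
    (hK : ∀ t, StronglyMeasurable (K t)) (hKb : ∀ t s, ‖K t s‖ ≤ b (t - s)) (hb : Integrable b)
    (hh : StronglyMeasurable h) (hM : ∀ s, ‖h s‖ ≤ M)
    (hK' : ∀ s, Tendsto (fun i => K (t + r i) (s + r i)) l (𝓝 (K' t s)))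
    (hh' : ∀ s, Tendsto (fun i => h (s + r i)) l (𝓝 (h' s))) :
    Tendsto (fun i => ∫ s, K (t + r i) s • h s) l (𝓝 (∫ s, K' t s • h' s)) := by
  have hshift : ∀ i, ∫ s, K (t + r i) s • h s = ∫ s, K (t + r i) (s + r i) • h (s + r i) :=
    fun i => (integral_add_right_eq_self (fun s => K (t + r i) s • h s) (r i)).symm
  simp only [hshift]
  refine tendsto_integral_filter_of_dominated_convergence (fun s => b (t - s) * M)
    (Eventually.of_forall fun i => (((hK _).smul hh).comp_measurable
      (measurable_id.add_const (r i))).aestronglyMeasurable)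
    (Eventually.of_forall fun i => Eventually.of_forall fun s => ?_)
    ((hb.comp_sub_left t).mul_const M) (Eventually.of_forall fun s => (hK' s).smul (hh' s))
  have hKs : ‖K (t + r i) (s + r i)‖ ≤ b (t - s) := by
    simpa only [add_sub_add_right_eq_sub] using hKb (t + r i) (s + r i)
  exact (norm_smul_le _ _).trans
    (mul_le_mul hKs (hM _) (norm_nonneg _) ((norm_nonneg _).trans hKs))

theorem isTranslationLimit_integral_kernel_smul {F : Filter ℝ} [F.NeBot] [F.IsCountablyGenerated]
    {K K' : ℝ → ℝ → R} {h h' : ℝ → W} {b : ℝ → ℝ} (hK : ∀ t, StronglyMeasurable (K t))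
    (hKb : ∀ t s, ‖K t s‖ ≤ b (t - s)) (hb : Integrable b) (hh : StronglyMeasurable h)
    (hM : ∀ s, ‖h s‖ ≤ M) (hK' : IsDiagonalTranslationLimit F K K')
    (hh' : IsTranslationLimit F h h') :
    IsTranslationLimit F (fun t => ∫ s, K t s • h s) fun t => ∫ s, K' t s • h' s := by
  have hK'meas : ∀ t, StronglyMeasurable (K' t) := fun t =>
    stronglyMeasurable_of_tendsto F
      (fun r => (hK (t + r)).comp_measurable (measurable_id.add_const r))
      (tendsto_pi_nhds.2 (hK'.1 t))
  have hK'b : ∀ t s, ‖K' t s‖ ≤ b (t - s) := fun t s =>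
    le_of_tendsto (hK'.1 t s).norm (Eventually.of_forall fun r => by
      simpa only [add_sub_add_right_eq_sub] using hKb (t + r) (s + r))
  refine ⟨fun t => tendsto_integral_kernel_smul_add hK hKb hb hh hM (hK'.1 t) hh'.1,
    fun t => ?_⟩
  simpa only [sub_eq_add_neg] using
    tendsto_integral_kernel_smul_add (r := fun r => -r) hK'meas hK'b hb
      (hh'.stronglyMeasurable hh) (hh'.norm_le hM) (by simpa only [sub_eq_add_neg] using hK'.2 t)
      (by simpa only [sub_eq_add_neg] using hh'.2)

theorem IsEvolutionFamily.almostAutomorphic_greenIntegral [NormedAlgebra ℝ R] [CompleteSpace R]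
    [CompleteSpace W] [IsScalarTower ℝ R W] (hU : IsEvolutionFamily A U)
    (hD : HasExponentialDichotomy U P c α) (hA : AlmostAutomorphic A)
    (hh : AlmostAutomorphic h) : AlmostAutomorphic (greenIntegral U P h) := by
  obtain ⟨C, hC⟩ := hA.exists_norm_le
  obtain ⟨M, hM⟩ := hh.exists_norm_le
  refine .of_exists_subseq (continuous_iff_continuousAt.2 fun t =>
    (hU.hasDerivAt_greenIntegral hD hh.continuous hM t).continuousAt) fun σ => ?_
  obtain ⟨k, hk, ⟨A', hA'⟩, h', hh'⟩ := hA.exists_subseq_pair hh σ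
  obtain ⟨G', hG'⟩ := hU.exists_isDiagonalTranslationLimit_greenFunction hA.continuous hC hD hA'
  have hexp : Integrable fun u => c * Real.exp (-α * |u|) := by
    simpa using ((integrable_exp_neg_mul_abs_sub hD.exponent_pos 0).const_mul c)
  exact ⟨k, hk, _, isTranslationLimit_integral_kernel_smul
    (hU.stronglyMeasurable_greenFunction P) hD.norm_le hexp hh.continuous.stronglyMeasurable hM
    hG' hh'⟩

end AlmostAutomorphic

end GreenIntegral

section FixedPoint

open scoped NNReal

variable {X W : Type*} [NormedAddCommGroup W]

theorem isClosed_setOf_almostAutomorphic [CompleteSpace W] :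
    IsClosed {y : BoundedContinuousFunction ℝ W | AlmostAutomorphic y} :=
  IsSeqClosed.isClosed fun _ _ hχ hlim =>
    .of_tendstoUniformly hχ (BoundedContinuousFunction.tendsto_iff_tendstoUniformly.1 hlim)

theorem isClosed_setOf_forall_mem_closedBall [TopologicalSpace X] (φ : X → W) (ρ : ℝ) :
    IsClosed {y : BoundedContinuousFunction X W | ∀ t, y t ∈ Metric.closedBall (φ t) ρ} := by
  simp only [Set.ofPred_forall]
  exact isClosed_iInter fun t =>
    Metric.isClosed_closedBall.preimage (continuous_eval_const t)

-- `T` acts on plain functions; only its restriction to `S` has to land in bounded continuous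
-- functions.
theorem exists_fixedPoint_of_contracting [TopologicalSpace X] [CompleteSpace W]
    {S : Set (BoundedContinuousFunction X W)} (hS : IsClosed S) (hne : S.Nonempty)
    {T : (X → W) → X → W} (hT : ∀ y ∈ S, ∃ x ∈ S, x = T y) {K : ℝ} (hK : K < 1)
    (hcontr : ∀ y ∈ S, ∀ z ∈ S, ∀ t, ‖T y t - T z t‖ ≤ K * dist y z) :
    ∃ y ∈ S, T y = y := by
  choose! f hfS hfT using hT
  obtain ⟨y₀, hy₀⟩ := hne
  have hlip : ContractingWith K.toNNReal (Set.MapsTo.restrict f S S hfS) := by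
    refine ⟨Real.toNNReal_lt_one.2 hK, LipschitzWith.of_dist_le_mul fun y z => ?_⟩
    refine (BoundedContinuousFunction.dist_le (by positivity)).2 fun t => ?_
    change dist (f y t) (f z t) ≤ _
    rw [hfT _ y.2, hfT _ z.2, dist_eq_norm]
    exact (hcontr y y.2 z z.2 t).trans
      (mul_le_mul_of_nonneg_right (Real.le_coe_toNNReal K) dist_nonneg)
  obtain ⟨y, hy, hfix, -⟩ := hlip.exists_fixedPoint' hS.isComplete hfS hy₀ (edist_ne_top _ _)
  exact ⟨y, hy, (hfT y hy).symm.trans (congrArg _ hfix)⟩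

theorem eq_of_forall_norm_sub_le_mul {y z : X → W} {K M : ℝ} (hK : K < 1)
    (hM : ∀ t, ‖y t - z t‖ ≤ M)
    (hcontr : ∀ M, (∀ t, ‖y t - z t‖ ≤ M) → ∀ t, ‖y t - z t‖ ≤ K * M) : y = z := by
  funext t
  have hbdd : BddAbove (Set.range fun t => ‖y t - z t‖) := ⟨M, Set.forall_mem_range.2 hM⟩
  set s := ⨆ t, ‖y t - z t‖
  have hle : ∀ t, ‖y t - z t‖ ≤ s := le_ciSup hbdd
  have : Nonempty X := ⟨t⟩
  have hs : s ≤ K * s := ciSup_le (hcontr s hle)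
  have hs' : s ≤ 0 := by nlinarith
  exact sub_eq_zero.1 (norm_le_zero_iff.1 ((hle t).trans hs'))

theorem norm_le_of_lipschitzOnWith_closedBall {L : ℝ≥0} {ρ : ℝ} {g : W → W} {φ w : W}
    (hg : LipschitzOnWith L g (Metric.closedBall φ ρ)) (hg0 : g 0 = 0) (hφ : ‖φ‖ ≤ ρ)
    (hw : w ∈ Metric.closedBall φ ρ) : ‖g w‖ ≤ L * (2 * ρ) := by
  have h0 : (0 : W) ∈ Metric.closedBall φ ρ := by rwa [mem_closedBall_iff_norm', sub_zero]
  have hwρ : ‖w‖ ≤ 2 * ρ :=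
    calc ‖w‖ ≤ ‖w - φ‖ + ‖φ‖ := norm_le_norm_sub_add w φ
      _ ≤ ρ + ρ := add_le_add (mem_closedBall_iff_norm.1 hw) hφ
      _ = 2 * ρ := (two_mul ρ).symm
  calc ‖g w‖ ≤ L * ‖w‖ := by simpa only [hg0, sub_zero] using hg.norm_sub_le hw h0
    _ ≤ L * (2 * ρ) := mul_le_mul_of_nonneg_left hwρ L.2

end FixedPoint

section Semilinear

open scoped NNReal

variable {R W : Type*} [NormedRing R] [NormedAlgebra ℝ R] [CompleteSpace R]
  [NormedAddCommGroup W] [NormedSpace ℝ W] [Module R W] [IsBoundedSMul R W]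
  {A : ℝ → R} {U : ℝ → ℝ → R} {P : R} {c α m M ρ : ℝ} {L : ℝ≥0}
  {f y z : ℝ → W} {g : ℝ → W → W}

/-- The Lyapunov–Perron operator of `x' = A(t) x + f(t) + g(t, x)`, whose fixed points are the
bounded solutions. -/
noncomputable def lyapunovPerron (U : ℝ → ℝ → R) (P : R) (f : ℝ → W) (g : ℝ → W → W)
    (y : ℝ → W) : ℝ → W :=
  greenIntegral U P fun s => f s + g s (y s)

theorem norm_lyapunovPerron_sub_greenIntegral_le (hU : IsEvolutionFamily A U)
    (hD : HasExponentialDichotomy U P c α) (hf : Continuous f) (hM : ∀ t, ‖f t‖ ≤ M)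
    (hgy : Continuous fun t => g t (y t)) (hgm : ∀ t, ‖g t (y t)‖ ≤ m) (t : ℝ) :
    ‖lyapunovPerron U P f g y t - greenIntegral U P f t‖ ≤ 2 * c / α * m :=
  hU.norm_greenIntegral_sub_le hD (hf.fun_add hgy).stronglyMeasurable
    (fun s => norm_add_le_of_le (hM s) (hgm s)) hf.stronglyMeasurable hM
    (fun s => by simpa only [add_sub_cancel_left] using hgm s) t

theorem norm_lyapunovPerron_sub_le (hU : IsEvolutionFamily A U)
    (hD : HasExponentialDichotomy U P c α) (hf : Continuous f) (hM : ∀ t, ‖f t‖ ≤ M)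
    (hgy : Continuous fun t => g t (y t)) (hgym : ∀ t, ‖g t (y t)‖ ≤ m)
    (hgz : Continuous fun t => g t (z t)) (hgzm : ∀ t, ‖g t (z t)‖ ≤ m) {N : ℝ}
    (hN : ∀ t, ‖g t (y t) - g t (z t)‖ ≤ N) (t : ℝ) :
    ‖lyapunovPerron U P f g y t - lyapunovPerron U P f g z t‖ ≤ 2 * c / α * N :=
  hU.norm_greenIntegral_sub_le hD (hf.fun_add hgy).stronglyMeasurable
    (fun s => norm_add_le_of_le (hM s) (hgym s)) (hf.fun_add hgz).stronglyMeasurable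
    (fun s => norm_add_le_of_le (hM s) (hgzm s))
    (fun s => by simpa only [add_sub_add_left_eq_sub] using hN s) t

theorem norm_lyapunovPerron_sub_le_of_lipschitzOnWith (hU : IsEvolutionFamily A U)
    (hD : HasExponentialDichotomy U P c α) (hf : Continuous f) (hM : ∀ t, ‖f t‖ ≤ M)
    (hgc : Continuous fun q : ℝ × W => g q.1 q.2) {B : ℝ → Set W}
    (hgm : ∀ t, ∀ w ∈ B t, ‖g t w‖ ≤ m) (hgL : ∀ t, LipschitzOnWith L (g t) (B t))
    (hy : Continuous y) (hyB : ∀ t, y t ∈ B t) (hz : Continuous z) (hzB : ∀ t, z t ∈ B t) {N : ℝ}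
    (hN : ∀ t, ‖y t - z t‖ ≤ N) (t : ℝ) :
    ‖lyapunovPerron U P f g y t - lyapunovPerron U P f g z t‖ ≤ 2 * c * L / α * N := by
  have hgN : ∀ t, ‖g t (y t) - g t (z t)‖ ≤ L * N := fun t =>
    ((hgL t).norm_sub_le (hyB t) (hzB t)).trans (mul_le_mul_of_nonneg_left (hN t) L.2)
  have hgy : Continuous fun t => g t (y t) := hgc.comp (continuous_id.prodMk hy)
  have hgz : Continuous fun t => g t (z t) := hgc.comp (continuous_id.prodMk hz)
  refine (norm_lyapunovPerron_sub_le hU hD hf hM hgy (fun t => hgm t _ (hyB t)) hgz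
    (fun t => hgm t _ (hzB t)) hgN t).trans_eq ?_
  ring

theorem eq_of_lyapunovPerron_eq (hU : IsEvolutionFamily A U)
    (hD : HasExponentialDichotomy U P c α) (hf : Continuous f) (hM : ∀ t, ‖f t‖ ≤ M)
    (hgc : Continuous fun q : ℝ × W => g q.1 q.2)
    (hgm : ∀ t, ∀ w ∈ Metric.closedBall (greenIntegral U P f t) ρ, ‖g t w‖ ≤ m)
    (hgL : ∀ t, LipschitzOnWith L (g t) (Metric.closedBall (greenIntegral U P f t) ρ))
    (hK : 2 * c * L / α < 1) (hy : Continuous y)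
    (hyball : ∀ t, y t ∈ Metric.closedBall (greenIntegral U P f t) ρ)
    (hyfix : lyapunovPerron U P f g y = y) (hz : Continuous z)
    (hzball : ∀ t, z t ∈ Metric.closedBall (greenIntegral U P f t) ρ)
    (hzfix : lyapunovPerron U P f g z = z) : y = z := by
  refine eq_of_forall_norm_sub_le_mul hK (M := ρ + ρ) (fun t => ?_) fun N hN t => ?_
  · rw [← dist_eq_norm]
    exact (dist_triangle_right _ _ _).trans (add_le_add (hyball t) (hzball t))
  · simpa only [hyfix, hzfix] using norm_lyapunovPerron_sub_le_of_lipschitzOnWith hU hD hf hM hgc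
      hgm hgL hy hyball hz hzball hN t

variable [CompleteSpace W] [IsScalarTower ℝ R W]

theorem almostAutomorphic_lyapunovPerron (hU : IsEvolutionFamily A U)
    (hD : HasExponentialDichotomy U P c α) (hA : AlmostAutomorphic A) (hf : AlmostAutomorphic f)
    (hg : AlmostAutomorphicUniform g) (hgc : Continuous fun q : ℝ × W => g q.1 q.2)
    (hy : AlmostAutomorphic y) : AlmostAutomorphic (lyapunovPerron U P f g y) :=
  hU.almostAutomorphic_greenIntegral hD hA (hf.add (.superposition hg hgc hy))

theorem forall_hasDerivAt_iff_lyapunovPerron_eq (hU : IsEvolutionFamily A U)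
    (hD : HasExponentialDichotomy U P c α) (hf : Continuous f) (hM : ∀ t, ‖f t‖ ≤ M)
    (hgy : Continuous fun t => g t (y t)) (hgm : ∀ t, ‖g t (y t)‖ ≤ m) {N : ℝ}
    (hN : ∀ t, ‖y t‖ ≤ N) :
    (∀ t, HasDerivAt y (A t • y t + (f t + g t (y t))) t) ↔ lyapunovPerron U P f g y = y := by
  have hbound : ∀ t, ‖f t + g t (y t)‖ ≤ M + m := fun t => norm_add_le_of_le (hM t) (hgm t)
  refine ⟨fun hy => funext fun t =>
    (hU.eq_greenIntegral_of_hasDerivAt hD (hf.add hgy) hbound hy hN t).symm, fun hy t => ?_⟩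
  have hderiv := hU.hasDerivAt_greenIntegral hD (hf.add hgy) hbound t
  change HasDerivAt (lyapunovPerron U P f g y) (A t • lyapunovPerron U P f g y t + _) t at hderiv
  rwa [hy] at hderiv

theorem exists_almostAutomorphic_lyapunovPerron_eq (hU : IsEvolutionFamily A U)
    (hD : HasExponentialDichotomy U P c α) (hA : AlmostAutomorphic A) (hf : AlmostAutomorphic f)
    (hg : AlmostAutomorphicUniform g) (hgc : Continuous fun q : ℝ × W => g q.1 q.2)
    (hgm : ∀ t, ∀ w ∈ Metric.closedBall (greenIntegral U P f t) ρ, ‖g t w‖ ≤ m)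
    (hgL : ∀ t, LipschitzOnWith L (g t) (Metric.closedBall (greenIntegral U P f t) ρ))
    (hρ : 0 ≤ ρ) (hm : 2 * c / α * m ≤ ρ) (hK : 2 * c * L / α < 1) :
    ∃ y, AlmostAutomorphic y ∧ (∀ t, y t ∈ Metric.closedBall (greenIntegral U P f t) ρ) ∧
      lyapunovPerron U P f g y = y := by
  obtain ⟨M, hM⟩ := hf.exists_norm_le
  have hφ := hU.almostAutomorphic_greenIntegral hD hA hf
  have exists_bounded : ∀ {y : ℝ → W}, AlmostAutomorphic y →
      ∃ x : BoundedContinuousFunction ℝ W, x = y := fun hy => let ⟨C, hC⟩ := hy.exists_norm_le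
      ⟨.ofNormedAddCommGroup _ hy.continuous C hC, rfl⟩
  let S : Set (BoundedContinuousFunction ℝ W) := {y | AlmostAutomorphic y} ∩
    {y | ∀ t, y t ∈ Metric.closedBall (greenIntegral U P f t) ρ}
  have hS : IsClosed S :=
    isClosed_setOf_almostAutomorphic.inter (isClosed_setOf_forall_mem_closedBall _ ρ)
  have hne : S.Nonempty := by
    obtain ⟨x, hx⟩ := exists_bounded hφ
    exact ⟨x, Set.mem_ofPred.2 (hx ▸ hφ), fun t => hx ▸ Metric.mem_closedBall_self hρ⟩
  have hT : ∀ y ∈ S, ∃ x ∈ S, x = lyapunovPerron U P f g y := fun y ⟨hy, hyball⟩ => by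
    have hTy := almostAutomorphic_lyapunovPerron hU hD hA hf hg hgc hy
    obtain ⟨x, hx⟩ := exists_bounded hTy
    refine ⟨x, ⟨Set.mem_ofPred.2 (hx ▸ hTy), fun t => ?_⟩, hx⟩
    rw [hx, mem_closedBall_iff_norm]
    exact (norm_lyapunovPerron_sub_greenIntegral_le hU hD hf.continuous hM
      (hgc.comp (continuous_id.prodMk hy.continuous)) (fun s => hgm s _ (hyball s)) t).trans hm
  obtain ⟨y, ⟨hy, hyball⟩, hfix⟩ := exists_fixedPoint_of_contracting hS hne hT hK
    fun y hy z hz => norm_lyapunovPerron_sub_le_of_lipschitzOnWith hU hD hf.continuous hM hgc hgm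
      hgL y.continuous hy.2 z.continuous hz.2 fun t =>
        (dist_eq_norm (y t) (z t)).symm.trans_le (BoundedContinuousFunction.dist_coe_le_dist t)
  exact ⟨y, hy, hyball, hfix⟩

theorem nonlinear_matrix_equation_unique_almost_automorphic_solution_general
    (hU : IsEvolutionFamily A U) (hD : HasExponentialDichotomy U P c α)
    (hA : AlmostAutomorphic A) (hf : AlmostAutomorphic f)
    (hφ : ∀ t, ‖greenIntegral U P f t‖ ≤ ρ) (hg : AlmostAutomorphicUniform g)
    (hgc : Continuous fun q : ℝ × W => g q.1 q.2) (hg0 : ∀ t, g t 0 = 0)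
    (hgL : ∀ t, LipschitzOnWith L (g t) (Metric.closedBall (greenIntegral U P f t) ρ))
    (hLα : 4 * c * L ≤ α) :
    ∃ y, (AlmostAutomorphic y ∧ (∀ t, y t ∈ Metric.closedBall (greenIntegral U P f t) ρ) ∧
        ∀ t, HasDerivAt y (A t • y t + f t + g t (y t)) t) ∧
      ∀ z, (∀ t, z t ∈ Metric.closedBall (greenIntegral U P f t) ρ) →
        (∀ t, HasDerivAt z (A t • z t + f t + g t (z t)) t) → z = y := by
  simp only [add_assoc]
  obtain ⟨M, hM⟩ := hf.exists_norm_le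
  have hα := hD.exponent_pos
  have hρ : 0 ≤ ρ := (norm_nonneg _).trans (hφ 0)
  have hm : 2 * c / α * (L * (2 * ρ)) ≤ ρ := by
    calc 2 * c / α * (L * (2 * ρ)) = 4 * c * L / α * ρ := by ring
      _ ≤ ρ := mul_le_of_le_one_left hρ ((div_le_one hα).2 hLα)
  have hK : 2 * c * L / α < 1 := (div_lt_one hα).2 (by linarith)
  have hgm : ∀ t, ∀ w ∈ Metric.closedBall (greenIntegral U P f t) ρ, ‖g t w‖ ≤ L * (2 * ρ) :=
    fun t w hw => norm_le_of_lipschitzOnWith_closedBall (hgL t) (hg0 t) (hφ t) hw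
  have solves_iff : ∀ {z : ℝ → W}, Continuous z →
      (∀ t, z t ∈ Metric.closedBall (greenIntegral U P f t) ρ) →
      ((∀ t, HasDerivAt z (A t • z t + (f t + g t (z t))) t) ↔ lyapunovPerron U P f g z = z) :=
    fun hz hzball => forall_hasDerivAt_iff_lyapunovPerron_eq hU hD hf.continuous hM
      (hgc.comp (continuous_id.prodMk hz)) (fun t => hgm t _ (hzball t))
      fun t => norm_le_norm_add_const_of_dist_le (hzball t) |>.trans (add_le_add_left (hφ t) ρ)
  obtain ⟨y, hy, hyball, hyfix⟩ :=
    exists_almostAutomorphic_lyapunovPerron_eq hU hD hA hf hg hgc hgm hgL hρ hm hK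
  refine ⟨y, ⟨hy, hyball, (solves_iff hy.continuous hyball).2 hyfix⟩, fun z hzball hz => ?_⟩
  have hzc : Continuous z := continuous_iff_continuousAt.2 fun t => (hz t).continuousAt
  exact eq_of_lyapunovPerron_eq hU hD hf.continuous hM hgc hgm hgL hK hzc hzball
    ((solves_iff hzc hzball).1 hz) hy.continuous hyball hyfix

end Semilinear

section Matrix

open scoped Matrix.Module

variable {p : ℕ} {A Φ : ℝ → Matrix (Fin p) (Fin p) ℂ} {P : Matrix (Fin p) (Fin p) ℂ} {c α : ℝ}

instance isBoundedSMul_matrix_pi {m 𝕜 V : Type*} [Fintype m] [DecidableEq m] [NormedField 𝕜]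
    [NormedAddCommGroup V] [NormedSpace 𝕜 V] : IsBoundedSMul (Matrix m m 𝕜) (m → V) :=
  .of_norm_smul_le fun N v => by
    refine (pi_norm_le_iff_of_nonneg (by positivity)).2 fun i => ?_
    have hrow : ∑ j, ‖N i j‖ ≤ ‖N‖ := by
      simpa only [Matrix.linfty_opNorm_def, NNReal.coe_sum, coe_nnnorm] using NNReal.coe_le_coe.2
        (Finset.le_sup (f := fun i => ∑ j, ‖N i j‖₊) (Finset.mem_univ i))
    calc ‖(N • v) i‖ ≤ ∑ j, ‖N i j‖ * ‖v‖ := norm_sum_le_of_le _ fun j _ =>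
          (norm_smul_le _ _).trans (mul_le_mul_of_nonneg_left (norm_le_pi_norm v j) (norm_nonneg _))
      _ = (∑ j, ‖N i j‖) * ‖v‖ := (Finset.sum_mul _ _ _).symm
      _ ≤ ‖N‖ * ‖v‖ := mul_le_mul_of_nonneg_right hrow (norm_nonneg v)

theorem IsFundamentalMatrix.isEvolutionFamily (hΦ : IsFundamentalMatrix A Φ) :
    IsEvolutionFamily A fun t s => Φ t * (Φ s)⁻¹ where
  self t := Matrix.mul_nonsing_inv _ ((Matrix.isUnit_iff_isUnit_det _).1 (hΦ.2 t))
  mul t s r := by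
    rw [mul_assoc, Matrix.nonsing_inv_mul_cancel_left _ _
      ((Matrix.isUnit_iff_isUnit_det _).1 (hΦ.2 s))]
  hasDerivAt t s := ((hΦ.1 t).mul_const (Φ s)⁻¹).congr_deriv (mul_assoc _ _ _)

theorem hasExponentialDichotomy_of_norm_greenMat_le (hP : IsIdempotentElem P)
    (hcomm : ∀ t, Commute (Φ t) P) (hα : 0 < α)
    (hdich : ∀ t s, ‖GreenMat Φ P t s‖ ≤ c * Real.exp (-α * |t - s|)) :
    HasExponentialDichotomy (fun t s => Φ t * (Φ s)⁻¹) P c α where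
  isIdempotentElem := hP
  commute t s := (hcomm t).mul_left <| by
    simpa only [Matrix.zpow_neg_one] using Matrix.Commute.zpow_left (hcomm s) (-1)
  exponent_pos := hα
  norm_le := hdich

end Matrix

theorem nonlinear_matrix_equation_unique_almost_automorphic_solution
    {V : Type*} [NormedAddCommGroup V] [NormedSpace ℂ V] [CompleteSpace V] {p : ℕ}
    (A ΦA : ℝ → Matrix (Fin p) (Fin p) ℂ)
    (hAc : Continuous A) (hAb : ∃ C, ∀ t, ‖A t‖ ≤ C)
    (hAaa : ∀ i j : Fin p, AlmostAutomorphic (fun t => A t i j))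
    (hΦA : IsFundamentalMatrix A ΦA)
    (P : Matrix (Fin p) (Fin p) ℂ) (hP : P * P = P)
    (hPcomm : ∀ t : ℝ, ΦA t * P = P * ΦA t)
    (c α : ℝ) (hc : 0 < c) (hα : 0 < α)
    (hdich : ∀ t s : ℝ, ‖GreenMat ΦA P t s‖ ≤ c * Real.exp (-α * |t - s|))
    (ρ : ℝ) (hρ : 0 < ρ)
    (f : ℝ → (Fin p → V)) (hfc : Continuous f) (hfaa : AlmostAutomorphic f)
    (hfb : ∀ t : ℝ, ‖f t‖ ≤ α * ρ / (2 * c))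
    (g : ℝ → (Fin p → V) → (Fin p → V))
    (hgc : Continuous fun q : ℝ × (Fin p → V) => g q.1 q.2)
    (hg0 : ∀ t : ℝ, g t 0 = 0)
    (hgaa : AlmostAutomorphicUniform g)
    (L : ℝ) (hL : 0 < L)
    (hglip : ∀ (t : ℝ) (y₁ y₂ : Fin p → V),
      ‖y₁ - greenSol ΦA P f t‖ ≤ ρ → ‖y₂ - greenSol ΦA P f t‖ ≤ ρ →
      ‖g t y₁ - g t y₂‖ ≤ L * ‖y₁ - y₂‖)
    (hLα : 4 * c * L < α) :
    ∃! y : ℝ → (Fin p → V),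
      AlmostAutomorphic y ∧
      (∀ t : ℝ, ‖y t - greenSol ΦA P f t‖ ≤ ρ) ∧
      (∀ (t : ℝ) (i : Fin p),
        HasDerivAt (fun t => y t i)
          ((∑ j : Fin p, A t i j • y t j) + f t i + g t (y t) i) t) := by
  open scoped Matrix.Module in
  have hD := hasExponentialDichotomy_of_norm_greenMat_le hP hPcomm hα hdich
  have hφ : ∀ t, ‖greenSol ΦA P f t‖ ≤ ρ := fun t =>
    (hD.norm_greenIntegral_le hfb t).trans_eq (by field_simp)
  lift L to NNReal using hL.le
  obtain ⟨y, ⟨hy, hyball, hysol⟩, huniq⟩ :=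
    nonlinear_matrix_equation_unique_almost_automorphic_solution_general hΦA.isEvolutionFamily hD
      (.of_entries hAaa) hfaa hφ hgaa hgc hg0
      (fun t => lipschitzOnWith_iff_norm_sub_le.2 fun _ hw₁ _ hw₂ => hglip t _ _
        (mem_closedBall_iff_norm.1 hw₁) (mem_closedBall_iff_norm.1 hw₂)) hLα.le
  exact ⟨y,
    ⟨hy, fun t => mem_closedBall_iff_norm.1 (hyball t), fun t => hasDerivAt_pi.1 (hysol t)⟩,
    fun z ⟨_, hzball, hzsol⟩ => huniq z (fun t => mem_closedBall_iff_norm.2 (hzball t))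
      fun t => hasDerivAt_pi.2 (hzsol t)⟩
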